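/- Let d ≥ 4, let k be an integer with 0 ≤ k ≤ d/3 − 1, let x_1, …, x_k be orthonormal vectors in ℝ^d, and let x ∈ B_d(0,1). Let S = S^{d−1} ∩ {w ∈ ℝ^d : |⟨x_i, w⟩| ≤ d^{−3} for all i ≤ k} (a set of positive σ_{d−1}-measure), and let μ be the probability measure obtained by conditioning σ_{d−1} on S. Let 0 < δ ≤ 1 and let φ : S^{d−1} → ℝ^d be any map satisfying ‖φ(w) − w‖ ≤ δ for all w ∈ S^{d−1}. If y is distributed according to μ and z = φ(y), then for every t ≥ 4, ℙ(|⟨x, z⟩| ≥ √(t/d) + 1/d² + δ) ≤ 2 √t · e^{−t/3}. -/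

import Mathlib

open MeasureTheory
open scoped RealInnerProductSpace

/-- The uniform probability measure on the unit sphere of `ℝ^d`, viewed as a measure on
`EuclideanSpace ℝ (Fin d)`: the normalized rotation-invariant surface measure. -/
noncomputable def sphereUniform (d : ℕ) : Measure (EuclideanSpace ℝ (Fin d)) :=
  (((volume : Measure (EuclideanSpace ℝ (Fin d))).toSphere Set.univ)⁻¹ •
    (volume : Measure (EuclideanSpace ℝ (Fin d))).toSphere).map Subtype.val


section helpers
open Metric Set
open scoped Pointwise
variable {F : Type*} [NormedAddCommGroup F] [InnerProductSpace ℝ F] [FiniteDimensional ℝ F]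
  [MeasurableSpace F] [BorelSpace F]

lemma cone_toSphere [Nontrivial F] (μ : Measure F) [μ.IsAddHaarMeasure] (C : Set F)
    (hC : MeasurableSet C) (hom : ∀ r : ℝ, 0 < r → ∀ w ∈ C, r • w ∈ C) :
    μ.toSphere (Subtype.val ⁻¹' C) = Module.finrank ℝ F * μ (ball 0 1 ∩ C) := by
  rw [μ.toSphere_apply' (measurable_subtype_coe hC)]
  congr 1
  have : Ioo (0:ℝ) 1 • ((↑) '' ((↑) ⁻¹' C : Set (sphere (0:F) 1)) : Set F)
      = (ball 0 1 ∩ C) \ {0} := by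
    ext w
    simp only [Set.mem_smul, mem_image, mem_preimage, mem_sdiff, mem_inter_iff, mem_ball_zero_iff,
      mem_singleton_iff]
    constructor
    · rintro ⟨r, hr, _, ⟨y, hy, rfl⟩, rfl⟩
      have hy1 : ‖(y:F)‖ = 1 := by simp
      refine ⟨⟨?_, hom r hr.1 _ hy⟩, ?_⟩
      · rw [norm_smul, hy1, Real.norm_eq_abs, abs_of_pos hr.1]; simpa using hr.2
      · intro h
        have := congrArg norm h
        rw [norm_smul, hy1, Real.norm_eq_abs, abs_of_pos hr.1] at this
        simp at this
        linarith [hr.1]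
    · rintro ⟨⟨h1, h2⟩, h3⟩
      have hw : 0 < ‖w‖ := norm_pos_iff.2 h3
      refine ⟨‖w‖, ⟨hw, h1⟩, ‖w‖⁻¹ • w, ⟨⟨‖w‖⁻¹ • w, ?_⟩, ?_, rfl⟩, ?_⟩
      · simp [norm_smul, hw.ne']
      · exact hom _ (inv_pos.2 hw) _ h2
      · rw [smul_smul, mul_inv_cancel₀ hw.ne', one_smul]
  rw [this, measure_sdiff_null (measure_singleton _)]

lemma polar_cone [Nontrivial F] (μ : Measure F) [μ.IsAddHaarMeasure] (C : Set F)
    (hom : ∀ r : ℝ, 0 < r → ∀ w ∈ C, r • w ∈ C) (I : Set ℝ) :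
    μ ({b | ‖b‖ ∈ I} ∩ C) = μ.toSphere (Subtype.val ⁻¹' C) *
      Measure.volumeIoiPow (Module.finrank ℝ F - 1) (Subtype.val ⁻¹' I) := by
  rw [← Measure.prod_prod, ← (μ.measurePreserving_homeomorphUnitSphereProd).measure_preimage_emb
    (Homeomorph.measurableEmbedding _), comap_subtype_coe_apply (by measurability)]
  rw [← measure_sdiff_null (t := {0}) (measure_singleton _)]
  congr 1
  ext w
  simp only [mem_sdiff, mem_inter_iff, mem_ofPred_eq, mem_singleton_iff, mem_image, mem_preimage,
    mem_prod, homeomorphUnitSphereProd_apply_fst_coe, homeomorphUnitSphereProd_apply_snd_coe,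
    Subtype.exists, mem_compl_iff]
  constructor
  · rintro ⟨⟨h1, h2⟩, h3⟩
    exact ⟨w, h3, ⟨hom _ (inv_pos.2 (norm_pos_iff.2 h3)) _ h2, h1⟩, rfl⟩
  · rintro ⟨w, h3, ⟨h2, h1⟩, rfl⟩
    refine ⟨⟨h1, ?_⟩, h3⟩
    have hw := norm_pos_iff.2 h3
    have := hom _ hw _ h2
    rwa [smul_smul, mul_inv_cancel₀ hw.ne', one_smul] at this

lemma half_cap (μ : Measure F) [μ.IsAddHaarMeasure] (e : F) (he : ‖e‖ = 1)
    (s : ℝ) (hs0 : 0 < s) (hs1 : s ≤ 1) :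
    μ (ball 0 1 ∩ {b | s * ‖b‖ ≤ ⟪e, b⟫}) ≤
      ENNReal.ofReal (Real.exp (-(Module.finrank ℝ F) * s ^ 2 / 2)) * μ (ball 0 1) := by
  have key : ∀ c ρ : ℝ, 0 ≤ ρ → ρ ^ 2 ≤ Real.exp (-s ^ 2) →
      (∀ b : F, ‖b‖ < 1 → s * ‖b‖ ≤ ⟪e, b⟫ → ‖b - c • e‖ ^ 2 ≤ ρ ^ 2) →
      μ (ball 0 1 ∩ {b | s * ‖b‖ ≤ ⟪e, b⟫}) ≤
      ENNReal.ofReal (Real.exp (-(Module.finrank ℝ F) * s ^ 2 / 2)) * μ (ball 0 1) := by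
    intro c ρ hρ hρe h
    have sub : ball 0 1 ∩ {b | s * ‖b‖ ≤ ⟪e, b⟫} ⊆ closedBall (c • e) ρ := by
      rintro b ⟨hb1, hb2⟩
      rw [mem_closedBall, dist_eq_norm]
      exact (pow_le_pow_iff_left₀ (norm_nonneg _) hρ two_ne_zero).1
        (h b (mem_ball_zero_iff.1 hb1) hb2)
    refine (measure_mono sub).trans ?_
    rw [Measure.addHaar_closedBall μ _ hρ]
    gcongr
    have h2 : ρ ≤ Real.exp (-s ^ 2 / 2) := by
      refine (pow_le_pow_iff_left₀ hρ (Real.exp_pos _).le two_ne_zero).1 (hρe.trans_eq ?_)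
      rw [← Real.exp_nat_mul]; congr 1; push_cast; ring
    calc ρ ^ Module.finrank ℝ F ≤ Real.exp (-s ^ 2 / 2) ^ Module.finrank ℝ F := by gcongr
      _ = _ := by rw [← Real.exp_nat_mul]; congr 1; ring
  have nrm : ∀ (c : ℝ) (b : F), ‖b - c • e‖ ^ 2 = ‖b‖ ^ 2 - 2 * c * ⟪e, b⟫ + c ^ 2 := by
    intro c b
    rw [norm_sub_sq_real, inner_smul_right, norm_smul, he, real_inner_comm]
    simp; ring
  rcases le_total (s ^ 2) (1 / 2) with h | h
  · refine key s (Real.sqrt (1 - s ^ 2)) (Real.sqrt_nonneg _) ?_ ?_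
    · rw [Real.sq_sqrt (by linarith)]
      linarith [Real.add_one_le_exp (-s ^ 2)]
    · intro b hb1 hb2
      rw [Real.sq_sqrt (by linarith), nrm]
      have := norm_nonneg b
      nlinarith [mul_le_mul_of_nonneg_left hb2 hs0.le,
        mul_nonneg (sub_nonneg.2 hb1.le) (by linarith : 0 ≤ 1 - 2 * s ^ 2),
        mul_nonneg (sub_nonneg.2 hb1.le) this]
  · refine key (1 / (2 * s)) (1 / (2 * s)) (by positivity) ?_ ?_
    · have h1 : Real.exp (s ^ 2) ≤ 4 * s ^ 2 := by
        have hs2 : s ^ 2 ≤ 1 := by nlinarith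
        have := Real.norm_exp_sub_one_sub_id_le (x := s ^ 2) (by
          rw [Real.norm_eq_abs, abs_of_nonneg (by positivity)]; exact hs2)
        rw [Real.norm_eq_abs, Real.norm_eq_abs, sq_abs] at this
        have := (abs_le.1 this).2
        nlinarith
      rw [Real.exp_neg, div_pow, one_pow, one_div]
      apply inv_anti₀ (Real.exp_pos _)
      linarith
    · intro b hb1 hb2
      rw [nrm]
      have h3 : ‖b‖ ≤ 2 * (1 / (2 * s)) * ⟪e, b⟫ := by
        have : 2 * (1 / (2 * s)) = 1 / s := by field_simp
        rw [this, one_div, ← div_eq_inv_mul, le_div_iff₀ hs0]; linarith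
      nlinarith [norm_nonneg b]

lemma two_cap (μ : Measure F) [μ.IsAddHaarMeasure] (e : F) (he : ‖e‖ = 1)
    (s : ℝ) (hs0 : 0 < s) (hs1 : s ≤ 1) :
    μ (ball 0 1 ∩ {b | s * ‖b‖ ≤ |⟪e, b⟫|}) ≤
      ENNReal.ofReal (2 * Real.exp (-(Module.finrank ℝ F) * s ^ 2 / 2)) * μ (ball 0 1) := by
  have sub : ball 0 1 ∩ {b | s * ‖b‖ ≤ |⟪e, b⟫|} ⊆
      (ball 0 1 ∩ {b | s * ‖b‖ ≤ ⟪e, b⟫}) ∪ (ball 0 1 ∩ {b | s * ‖b‖ ≤ ⟪-e, b⟫}) := by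
    rintro b ⟨h1, h2⟩
    rcases le_abs.1 (show s * ‖b‖ ≤ |⟪e, b⟫| from h2) with h | h
    · exact Or.inl ⟨h1, h⟩
    · exact Or.inr ⟨h1, by simpa [inner_neg_left] using h⟩
  refine (measure_mono sub).trans ((measure_union_le _ _).trans ?_)
  refine (add_le_add (half_cap μ e he s hs0 hs1)
    (half_cap μ (-e) (by simpa using he) s hs0 hs1)).trans_eq ?_
  rw [← add_mul, ← ENNReal.ofReal_add (Real.exp_pos _).le (Real.exp_pos _).le, two_mul]

lemma radial_cap (μ : Measure F) [μ.IsAddHaarMeasure] (e : F) (he : ‖e‖ = 1)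
    (s : ℝ) (hs0 : 0 < s) (hs1 : s ≤ 1) (I : Set ℝ) :
    μ ({b | ‖b‖ ∈ I} ∩ {b | s * ‖b‖ ≤ |⟪e, b⟫|}) ≤
      ENNReal.ofReal (2 * Real.exp (-(Module.finrank ℝ F) * s ^ 2 / 2)) * μ {b | ‖b‖ ∈ I} := by
  have : Nontrivial F := ⟨⟨e, 0, fun h => by simp [h] at he⟩⟩
  have hom : ∀ r : ℝ, 0 < r → ∀ w ∈ {b : F | s * ‖b‖ ≤ |⟪e, b⟫|},
      r • w ∈ {b : F | s * ‖b‖ ≤ |⟪e, b⟫|} := by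
    intro r hr w hw
    simp only [mem_ofPred_eq, norm_smul, inner_smul_right, abs_mul, Real.norm_eq_abs,
      abs_of_pos hr] at hw ⊢
    nlinarith
  have hm : MeasurableSet {b : F | s * ‖b‖ ≤ |⟪e, b⟫|} :=
    (isClosed_le (by fun_prop) (by fun_prop)).measurableSet
  have h2 := polar_cone μ Set.univ (by simp) I
  rw [inter_univ] at h2
  rw [polar_cone μ _ hom I, h2, ← mul_assoc]
  gcongr
  rw [cone_toSphere μ _ hm hom, preimage_univ, Measure.toSphere_apply_univ, mul_left_comm]
  gcongr
  exact two_cap μ e he s hs0 hs1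

lemma fiber_cap (K : Submodule ℝ F) (e : F) (heK : e ∈ Kᗮ) (he : ‖e‖ = 1)
    (s : ℝ) (hs0 : 0 < s) (hs1 : s ≤ 1) (A : Set F) (hA : MeasurableSet A)
    (hfib : ∀ a ∈ K, ∃ I : Set ℝ, ∀ b ∈ Kᗮ, a + b ∈ A ↔ ‖b‖ ∈ I) :
    (volume : Measure F) (A ∩ {w | s * ‖w‖ ≤ |⟪e, w⟫|}) ≤
      ENNReal.ofReal (2 * Real.exp (-(Module.finrank ℝ Kᗮ) * s ^ 2 / 2)) * (volume : Measure F) A := by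
  have mp : MeasurePreserving (fun p : K × Kᗮ => (p.1 : F) + (p.2 : F)) volume volume := by
    have := K.orthogonalDecomposition.symm.measurePreserving.comp
      (WithLp.volume_preserving_toLp K Kᗮ)
    have eq : (fun p : K × Kᗮ => (p.1 : F) + (p.2 : F)) =
        K.orthogonalDecomposition.symm ∘ WithLp.toLp 2 := by
      ext p
      simp
    rw [eq]
    exact this
  have hm : MeasurableSet {b : F | s * ‖b‖ ≤ |⟪e, b⟫|} :=
    (isClosed_le (by fun_prop) (by fun_prop)).measurableSet
  rw [← mp.measure_preimage (hA.inter hm).nullMeasurableSet,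
    ← mp.measure_preimage hA.nullMeasurableSet, Measure.volume_eq_prod,
    Measure.prod_apply (mp.measurable (hA.inter hm)), Measure.prod_apply (mp.measurable hA),
    ← lintegral_const_mul' _ _ ENNReal.ofReal_ne_top]
  refine lintegral_mono fun a => ?_
  obtain ⟨I, hI⟩ := hfib a a.2
  have e1 : (Prod.mk a ⁻¹' ((fun p : K × Kᗮ => (p.1 : F) + (p.2 : F)) ⁻¹' A)) =
      {b : Kᗮ | ‖b‖ ∈ I} := by
    ext b
    simpa using hI b b.2
  rw [e1]
  refine le_trans (measure_mono ?_) (radial_cap volume (⟨e, heK⟩ : Kᗮ) he s hs0 hs1 I)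
  intro b hb
  obtain ⟨hb1, hb2⟩ := hb
  refine ⟨(hI b b.2).1 hb1, ?_⟩
  have h0 : ⟪e, (a : F)⟫ = 0 := Submodule.inner_left_of_mem_orthogonal a.2 heK
  have hab : ⟪(a : F), (b : F)⟫ = 0 := Submodule.inner_right_of_mem_orthogonal a.2 b.2
  simp only [mem_ofPred_eq, inner_add_right, h0, zero_add] at hb2
  have hn : ‖(b : F)‖ ≤ ‖(a : F) + b‖ := by
    have := norm_add_sq_eq_norm_sq_add_norm_sq_real hab
    nlinarith [norm_nonneg (b : F), norm_nonneg ((a : F) + b), sq_nonneg ‖(a : F)‖]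
  change s * ‖(b : F)‖ ≤ |⟪e, (b : F)⟫|
  nlinarith
end helpers

lemma sphereUniform_cone (d : ℕ) [Nontrivial (EuclideanSpace ℝ (Fin d))]
    (C : Set (EuclideanSpace ℝ (Fin d)))
    (hC : MeasurableSet C) (hom : ∀ r : ℝ, 0 < r → ∀ w ∈ C, r • w ∈ C) :
    sphereUniform d (Metric.sphere 0 1 ∩ C) =
      ((volume : Measure (EuclideanSpace ℝ (Fin d))).toSphere Set.univ)⁻¹ *
        (Module.finrank ℝ (EuclideanSpace ℝ (Fin d)) *
          (volume : Measure (EuclideanSpace ℝ (Fin d))) (Metric.ball 0 1 ∩ C)) := by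
  rw [sphereUniform, Measure.map_apply measurable_subtype_coe
    (Metric.isClosed_sphere.measurableSet.inter hC), Measure.smul_apply, smul_eq_mul,
    ← cone_toSphere volume C hC hom]
  congr 2
  ext y
  simp

set_option maxHeartbeats 1000000 in
/-- Concentration for the `δ`-discretization `z = φ(y)` of a random unit vector `y`
conditioned to be `1/d³`-approximately orthogonal to `k ≤ d/3 - 1` orthonormal vectors:
for any fixed `x` in the unit ball and `t ≥ 4`,
`ℙ(|⟨x, z⟩| ≥ √(t/d) + 1/d² + δ) ≤ 2√t e^{-t/3}`. -/
theorem conditioned_sphere_concentration_discretized (d k : ℕ) (hd : 4 ≤ d)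
    (hk : (k : ℝ) ≤ (d : ℝ) / 3 - 1)
    (x : Fin k → EuclideanSpace ℝ (Fin d)) (hx : Orthonormal ℝ x)
    (x₀ : EuclideanSpace ℝ (Fin d)) (hx₀ : x₀ ∈ Metric.closedBall (0 : EuclideanSpace ℝ (Fin d)) 1)
    (S : Set (EuclideanSpace ℝ (Fin d)))
    (hS : S = Metric.sphere (0 : EuclideanSpace ℝ (Fin d)) 1 ∩
        {w | ∀ i : Fin k, |⟪x i, w⟫| ≤ 1 / (d : ℝ) ^ 3})
    (δ : ℝ) (hδ0 : 0 < δ) (hδ1 : δ ≤ 1)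
    (φ : EuclideanSpace ℝ (Fin d) → EuclideanSpace ℝ (Fin d))
    (hφ : ∀ w ∈ Metric.sphere (0 : EuclideanSpace ℝ (Fin d)) 1, ‖φ w - w‖ ≤ δ)
    (t : ℝ) (ht : 4 ≤ t) :
    ProbabilityTheory.cond (sphereUniform d) S
        {y | Real.sqrt (t / d) + 1 / (d : ℝ) ^ 2 + δ ≤ |⟪x₀, φ y⟫|}
      ≤ ENNReal.ofReal (2 * Real.sqrt t * Real.exp (-t / 3)) := by
  have hd0 : (0 : ℝ) < d := by positivity
  have : Nontrivial (EuclideanSpace ℝ (Fin d)) := by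
    have : Nonempty (Fin d) := ⟨⟨0, by omega⟩⟩
    infer_instance
  set c : ℝ := 1 / (d : ℝ) ^ 3 with hc
  have hc0 : 0 < c := by positivity
  set s : ℝ := Real.sqrt (t / d) with hs
  have hs0 : 0 < s := Real.sqrt_pos.2 (by positivity)
  have hss : s ^ 2 = t / d := Real.sq_sqrt (by positivity)
  -- decompose `x₀`
  set u : EuclideanSpace ℝ (Fin d) := ∑ i, ⟪x i, x₀⟫ • x i with hu
  set v := x₀ - u with hv
  have hx1 : ∀ i, ‖x i‖ = 1 := hx.1
  have hx01 : ‖x₀‖ ≤ 1 := by simpa using hx₀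
  have hxv : ∀ i, ⟪x i, v⟫ = 0 := by
    intro i
    rw [hv, inner_sub_right, hu, hx.inner_right_fintype, sub_self]
  have huv : ⟪u, v⟫ = 0 := by
    rw [hu, sum_inner]
    simp [inner_smul_left, hxv]
  have hv1 : ‖v‖ ≤ 1 := by
    have h1 : ⟪x₀, v⟫ = ‖v‖ ^ 2 := by
      rw [show x₀ = u + v by rw [hv]; abel, inner_add_left, huv, zero_add, real_inner_self_eq_norm_sq]
    have h2 := real_inner_le_norm x₀ v
    by_contra! h
    nlinarith [norm_nonneg v]
  set K : Submodule ℝ (EuclideanSpace ℝ (Fin d)) := Submodule.span ℝ (Set.range x) with hK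
  have hxK : ∀ i, x i ∈ K := fun i => Submodule.subset_span ⟨i, rfl⟩
  have hvK : v ∈ Kᗮ := by
    rw [Submodule.mem_orthogonal]
    intro w hw
    induction hw using Submodule.span_induction with
    | mem w h => obtain ⟨i, rfl⟩ := h; exact hxv i
    | zero => simp
    | add a b _ _ ha hb => rw [inner_add_left, ha, hb, add_zero]
    | smul r a _ ha => rw [inner_smul_left, ha, mul_zero]
  have hkd : (k : ℝ) ≤ d := by linarith
  have hev : ∀ y ∈ S ∩ {y | s + 1 / (d : ℝ) ^ 2 + δ ≤ |⟪x₀, φ y⟫|}, s ≤ |⟪v, y⟫| := by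
    rintro y ⟨hyS, hy⟩
    rw [hS] at hyS
    obtain ⟨hy1, hy2⟩ := hyS
    have hy' : s + 1 / (d : ℝ) ^ 2 + δ ≤ |⟪x₀, φ y⟫| := hy
    have hy2' : ∀ i : Fin k, |⟪x i, y⟫| ≤ c := hy2
    have e1 : ⟪x₀, φ y⟫ = ⟪v, y⟫ + ⟪u, y⟫ + ⟪x₀, φ y - y⟫ := by
      rw [hv, inner_sub_left, inner_sub_right]; ring
    have b1 : |⟪x₀, φ y - y⟫| ≤ δ := by
      refine (abs_real_inner_le_norm _ _).trans ?_
      have := hφ y hy1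
      nlinarith [norm_nonneg x₀, norm_nonneg (φ y - y)]
    have b2 : |⟪u, y⟫| ≤ 1 / (d : ℝ) ^ 2 := by
      rw [hu, sum_inner]
      refine (Finset.abs_sum_le_sum_abs _ _).trans ?_
      have : ∀ i ∈ Finset.univ, |⟪⟪x i, x₀⟫ • x i, y⟫| ≤ c := by
        intro i _
        rw [inner_smul_left, abs_mul]
        have h1 : |⟪x i, x₀⟫| ≤ 1 := by
          refine (abs_real_inner_le_norm _ _).trans ?_
          rw [hx1, one_mul]; exact hx01
        have h2 := hy2' i
        simp only [conj_trivial]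
        nlinarith [abs_nonneg ⟪x i, x₀⟫, abs_nonneg ⟪x i, y⟫]
      refine (Finset.sum_le_sum this).trans ?_
      simp only [Finset.sum_const, Finset.card_univ, Fintype.card_fin, nsmul_eq_mul]
      calc (k : ℝ) * c ≤ d * c := by gcongr
        _ = 1 / (d : ℝ) ^ 2 := by rw [hc]; field_simp
    have b3 := abs_add_three ⟪v, y⟫ ⟪u, y⟫ ⟪x₀, φ y - y⟫
    rw [e1] at hy'
    linarith
  have hSc : IsClosed S := by
    rw [hS]
    refine Metric.isClosed_sphere.inter ?_
    simp only [Set.ofPred_forall]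
    exact isClosed_iInter fun i => isClosed_le (by fun_prop) (by fun_prop)
  rw [ProbabilityTheory.cond_apply hSc.measurableSet]
  rcases Set.eq_empty_or_nonempty (S ∩ {y | s + 1 / (d : ℝ) ^ 2 + δ ≤ |⟪x₀, φ y⟫|}) with hem | hne
  · rw [hem]; simp
  obtain ⟨y₀, hy₀⟩ := hne
  have hy₀1 : ‖y₀‖ = 1 := by
    have := hy₀.1
    rw [hS] at this
    simpa using this.1
  have hsv : s ≤ ‖v‖ := by
    have := abs_real_inner_le_norm v y₀
    rw [hy₀1, mul_one] at this
    exact (hev y₀ hy₀).trans this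
  have hs1 : s ≤ 1 := hsv.trans hv1
  have hv0 : 0 < ‖v‖ := hs0.trans_le hsv
  set e := ‖v‖⁻¹ • v with he
  have he1 : ‖e‖ = 1 := by rw [he, norm_smul, norm_inv, norm_norm, inv_mul_cancel₀ hv0.ne']
  have heK : e ∈ Kᗮ := Submodule.smul_mem _ _ hvK
  set C1 : Set (EuclideanSpace ℝ (Fin d)) := {w | ∀ i : Fin k, |⟪x i, w⟫| ≤ c * ‖w‖} with hC1
  set C2 : Set (EuclideanSpace ℝ (Fin d)) := {w | s * ‖w‖ ≤ |⟪e, w⟫|} with hC2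
  have mC1 : MeasurableSet C1 := by
    apply IsClosed.measurableSet
    simp only [hC1, Set.ofPred_forall]
    exact isClosed_iInter fun i => isClosed_le (by fun_prop) (by fun_prop)
  have mC2 : MeasurableSet C2 := (isClosed_le (by fun_prop) (by fun_prop)).measurableSet
  have hom1 : ∀ r : ℝ, 0 < r → ∀ w ∈ C1, r • w ∈ C1 := by
    intro r hr w hw i
    have := hw i
    rw [norm_smul, inner_smul_right, abs_mul, Real.norm_eq_abs, abs_of_pos hr]
    nlinarith
  have hom2 : ∀ r : ℝ, 0 < r → ∀ w ∈ C2, r • w ∈ C2 := by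
    intro r hr w hw
    have hw' : s * ‖w‖ ≤ |⟪e, w⟫| := hw
    change s * ‖r • w‖ ≤ |⟪e, r • w⟫|
    rw [norm_smul, inner_smul_right, abs_mul, Real.norm_eq_abs, abs_of_pos hr]
    nlinarith
  have hSC : S = Metric.sphere 0 1 ∩ C1 := by
    rw [hS]
    ext w
    refine and_congr_right fun hw => ?_
    have : ‖w‖ = 1 := by simpa using hw
    simp [hC1, this]
  have hsub : S ∩ {y | s + 1 / (d : ℝ) ^ 2 + δ ≤ |⟪x₀, φ y⟫|} ⊆
      Metric.sphere 0 1 ∩ (C1 ∩ C2) := by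
    intro y hy
    have h1 := hev y hy
    have h2 := hy.1
    rw [hSC] at h2
    refine ⟨h2.1, h2.2, ?_⟩
    have hy1 : ‖y‖ = 1 := by simpa using h2.1
    change s * ‖y‖ ≤ |⟪e, y⟫|
    rw [hy1, mul_one, he, inner_smul_left, abs_mul]
    simp only [conj_trivial, abs_inv, abs_norm]
    have : 1 ≤ ‖v‖⁻¹ := (one_le_inv₀ hv0).2 hv1
    nlinarith [abs_nonneg ⟪v, y⟫]
  set ε := ENNReal.ofReal (2 * Real.exp (-(Module.finrank ℝ Kᗮ) * s ^ 2 / 2)) with hε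
  have main : (volume : Measure (EuclideanSpace ℝ (Fin d))) (Metric.ball 0 1 ∩ (C1 ∩ C2)) ≤
      ε * (volume : Measure (EuclideanSpace ℝ (Fin d))) (Metric.ball 0 1 ∩ C1) := by
    rw [← Set.inter_assoc]
    refine fiber_cap K e heK he1 s hs0 hs1 (Metric.ball 0 1 ∩ C1)
      (measurableSet_ball.inter mC1) ?_
    intro a ha
    refine ⟨{r | Real.sqrt (‖a‖ ^ 2 + r ^ 2) < 1 ∧
      ∀ i, |⟪x i, a⟫| ≤ c * Real.sqrt (‖a‖ ^ 2 + r ^ 2)}, ?_⟩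
    intro b hb
    have hab : ⟪a, b⟫ = 0 := Submodule.inner_right_of_mem_orthogonal ha hb
    have hn : ‖a + b‖ = Real.sqrt (‖a‖ ^ 2 + ‖b‖ ^ 2) := by
      rw [← Real.sqrt_sq (norm_nonneg (a + b))]
      congr 1
      have := norm_add_sq_eq_norm_sq_add_norm_sq_real hab
      nlinarith
    have hi : ∀ i, ⟪x i, a + b⟫ = ⟪x i, a⟫ := by
      intro i
      rw [inner_add_right, Submodule.inner_right_of_mem_orthogonal (hxK i) hb, add_zero]
    simp [hC1, hn, hi]
  have hεle : ε ≤ ENNReal.ofReal (2 * Real.sqrt t * Real.exp (-t / 3)) := by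
    apply ENNReal.ofReal_le_ofReal
    have hfr : (Module.finrank ℝ K : ℝ) = k := by
      have := finrank_span_eq_card hx.linearIndependent
      rw [hK, this]; simp
    have hsum : (Module.finrank ℝ K : ℝ) + Module.finrank ℝ Kᗮ = d := by
      have := K.finrank_add_finrank_orthogonal
      rw [finrank_euclideanSpace_fin] at this
      exact_mod_cast this
    have hn : 2 * (d : ℝ) / 3 ≤ Module.finrank ℝ Kᗮ := by linarith
    have h1 : t / 3 ≤ Module.finrank ℝ Kᗮ * s ^ 2 / 2 := by
      have h3 : 2 * (d : ℝ) / 3 * s ^ 2 ≤ Module.finrank ℝ Kᗮ * s ^ 2 := by gcongr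
      have h4 : 2 * (d : ℝ) / 3 * s ^ 2 = 2 * t / 3 := by rw [hss]; field_simp
      linarith
    have h2 : 1 ≤ Real.sqrt t := Real.one_le_sqrt.2 (by linarith)
    have h5 : Real.exp (-(Module.finrank ℝ Kᗮ) * s ^ 2 / 2) ≤ Real.exp (-t / 3) :=
      Real.exp_le_exp.2 (by linarith)
    calc 2 * Real.exp (-(Module.finrank ℝ Kᗮ) * s ^ 2 / 2)
        ≤ 2 * Real.exp (-t / 3) := by gcongr
      _ = 2 * 1 * Real.exp (-t / 3) := by ring
      _ ≤ 2 * Real.sqrt t * Real.exp (-t / 3) := by gcongr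
  have hfin : sphereUniform d (S ∩ {y | s + 1 / (d : ℝ) ^ 2 + δ ≤ |⟪x₀, φ y⟫|}) ≤
      ε * sphereUniform d S := by
    refine (measure_mono hsub).trans ?_
    rw [hSC, sphereUniform_cone d _ (mC1.inter mC2)
      (fun r hr w hw => ⟨hom1 r hr w hw.1, hom2 r hr w hw.2⟩), sphereUniform_cone d _ mC1 hom1,
      mul_left_comm ε, mul_left_comm ε]
    gcongr
  calc (sphereUniform d S)⁻¹ * sphereUniform d (S ∩ {y | s + 1 / (d : ℝ) ^ 2 + δ ≤ |⟪x₀, φ y⟫|})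
      ≤ (sphereUniform d S)⁻¹ * (ε * sphereUniform d S) := by gcongr
    _ = ε * ((sphereUniform d S)⁻¹ * sphereUniform d S) := by rw [mul_left_comm]
    _ ≤ ε * 1 := by gcongr; exact ENNReal.inv_mul_le_one _
    _ ≤ _ := by rw [mul_one]; exact hεle
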